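/- arXiv:2206.14329 — 6 statements merged into one kernel-verified Lean document; each statement's English description precedes it below -/
import Mathlib

section
/- Let S be a nonempty finite set and let p and q be probability mass functions on S with q(x) > 0 for every x in S. Then the limit as α → 1 of the Rényi cross-entropy H_α(p;q) equals the Shannon cross-entropy H(p;q) = −Σ_{x∈S} p(x) ln q(x). -/
open Filter Topology

/-!
Since `∑ p = 1`, the moment function `M t = ∑ p q ^ t` satisfies `M 0 = 1`. Hence
`ln M (α - 1) / (α - 1)` is a difference quotient of `ln M` at `0`; it tends to
`M' 0 / M 0 = ∑ p ln q`, and the Rényi cross-entropy is its negative.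
-/

theorem hasDerivAt_sum_mul_rpow {ι : Type*} {s : Finset ι} {p q : ι → ℝ}
    (hq : ∀ x ∈ s, p x ≠ 0 → 0 < q x) (t : ℝ) :
    HasDerivAt (fun t : ℝ => ∑ x ∈ s, p x * q x ^ t)
      (∑ x ∈ s, p x * (q x ^ t * Real.log (q x))) t := by
  refine HasDerivAt.fun_sum fun x hx => ?_
  by_cases hpx : p x = 0
  · simpa only [hpx, zero_mul] using hasDerivAt_const t (0 : ℝ)
  · exact (Real.hasStrictDerivAt_const_rpow (hq x hx hpx) t).hasDerivAt.const_mul (p x)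

theorem tendsto_log_div_sub_of_hasDerivAt {f : ℝ → ℝ} {f' a : ℝ}
    (hf : HasDerivAt f f' a) (ha : f a = 1) :
    Tendsto (fun x => Real.log (f x) / (x - a)) (𝓝[≠] a) (𝓝 f') := by
  have hlog : HasDerivAt (fun x => Real.log (f x)) f' a := by
    simpa only [ha, div_one] using hf.log (ha.trans_ne one_ne_zero)
  refine (hasDerivAt_iff_tendsto_slope.mp hlog).congr fun x => ?_
  rw [slope_def_field, ha, Real.log_one, sub_zero]

theorem renyi_cross_entropy_tendsto_shannon_cross_entropy_general
    {ι : Type*} {s : Finset ι} {p q : ι → ℝ}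
    (hp : ∑ x ∈ s, p x = 1) (hq : ∀ x ∈ s, p x ≠ 0 → 0 < q x) :
    Tendsto (fun α : ℝ => (1 / (1 - α)) * Real.log (∑ x ∈ s, p x * q x ^ (α - 1)))
      (𝓝[≠] (1 : ℝ)) (𝓝 (-∑ x ∈ s, p x * Real.log (q x))) := by
  have hderiv : HasDerivAt (fun α : ℝ => ∑ x ∈ s, p x * q x ^ (α - 1))
      (∑ x ∈ s, p x * Real.log (q x)) 1 := by
    simpa only [sub_self, Real.rpow_zero, one_mul] using
      (hasDerivAt_sum_mul_rpow hq (1 - 1)).comp_sub_const 1 1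
  have hone : ∑ x ∈ s, p x * q x ^ ((1 : ℝ) - 1) = 1 := by
    simpa only [sub_self, Real.rpow_zero, mul_one] using hp
  refine (tendsto_log_div_sub_of_hasDerivAt hderiv hone).neg.congr fun α => ?_
  rw [← div_neg, neg_sub, one_div_mul_eq_div]

/-- For probability mass functions `p` and `q` on a nonempty finite set with `q` everywhere
positive, the Rényi cross-entropy `H_α(p;q) = (1/(1-α)) ln ∑_x p(x) q(x)^(α-1)` tends to the
Shannon cross-entropy `H(p;q) = -∑_x p(x) ln q(x)` as `α → 1`. -/
theorem renyi_cross_entropy_tendsto_shannon_cross_entropy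
    {S : Type*} [Fintype S] [Nonempty S]
    (p q : S → ℝ)
    (hp0 : ∀ x, 0 ≤ p x) (hp1 : ∑ x, p x = 1)
    (hq0 : ∀ x, 0 < q x) (hq1 : ∑ x, q x = 1) :
    Tendsto (fun α : ℝ => (1 / (1 - α)) * Real.log (∑ x, p x * q x ^ (α - 1)))
      (𝓝[≠] (1 : ℝ)) (𝓝 (-∑ x, p x * Real.log (q x))) :=
  renyi_cross_entropy_tendsto_shannon_cross_entropy_general hp1 fun x _ _ => hq0 x
end

section
/- Let S be a nonempty finite set and let p and q be probability mass functions on S with q(x) > 0 for every x in S. Then the Rényi cross-entropy is non-increasing in its order: for all α₁, α₂ with 0 < α₁ < α₂, α₁ ≠ 1 and α₂ ≠ 1, one has H_{α₂}(p;q) ≤ H_{α₁}(p;q). -/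
/-!
For a probability mass function `p`, the function `Φ(t) = log ∑ x, p x * q x ^ t` is convex by
Hölder's inequality, and `Φ(0) = 0`. Hence its secant slope `Φ(t) / t` at the origin is
non-decreasing on `t ≠ 0`, across the sign change of `t` as well. The Rényi cross-entropy of
order `α` is the negative of this slope at `t = α - 1`.
-/

section WeightedPowerSums

variable {ι : Type*} {s : Finset ι}

theorem sum_rpow_mul_rpow_le_rpow_sum_mul_rpow_sum {f g : ι → ℝ} {a b : ℝ}
    (hf : ∀ i ∈ s, 0 ≤ f i) (hg : ∀ i ∈ s, 0 ≤ g i) (ha : 0 < a) (hb : 0 < b) (hab : a + b = 1) :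
    ∑ i ∈ s, f i ^ a * g i ^ b ≤ (∑ i ∈ s, f i) ^ a * (∑ i ∈ s, g i) ^ b := by
  have hsum_f : ∑ i ∈ s, (f i ^ a) ^ a⁻¹ = ∑ i ∈ s, f i :=
    Finset.sum_congr rfl fun i hi => Real.rpow_rpow_inv (hf i hi) ha.ne'
  have hsum_g : ∑ i ∈ s, (g i ^ b) ^ b⁻¹ = ∑ i ∈ s, g i :=
    Finset.sum_congr rfl fun i hi => Real.rpow_rpow_inv (hg i hi) hb.ne'
  simpa only [hsum_f, hsum_g, one_div, inv_inv] using
    Real.inner_le_Lp_mul_Lq_of_nonneg s (Real.HolderConjugate.inv_inv ha hb hab)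
      (fun i hi => Real.rpow_nonneg (hf i hi) a) (fun i hi => Real.rpow_nonneg (hg i hi) b)

variable {w z : ι → ℝ}

theorem sum_mul_rpow_pos (hw : ∀ i ∈ s, 0 ≤ w i) (hw_sum : ∑ i ∈ s, w i ≠ 0)
    (hz : ∀ i ∈ s, 0 < z i) (t : ℝ) : 0 < ∑ i ∈ s, w i * z i ^ t := by
  obtain ⟨i, hi, hwi⟩ := Finset.exists_ne_zero_of_sum_ne_zero hw_sum
  exact Finset.sum_pos' (fun j hj => mul_nonneg (hw j hj) (Real.rpow_nonneg (hz j hj).le t))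
    ⟨i, hi, mul_pos ((hw i hi).lt_of_ne' hwi) (Real.rpow_pos_of_pos (hz i hi) t)⟩

theorem sum_mul_rpow_add_le (hw : ∀ i ∈ s, 0 ≤ w i) (hz : ∀ i ∈ s, 0 < z i) {a b : ℝ}
    (ha : 0 < a) (hb : 0 < b) (hab : a + b = 1) (t u : ℝ) :
    ∑ i ∈ s, w i * z i ^ (a * t + b * u) ≤
      (∑ i ∈ s, w i * z i ^ t) ^ a * (∑ i ∈ s, w i * z i ^ u) ^ b := by
  have hterm_nonneg (r : ℝ) (i : ι) (hi : i ∈ s) : 0 ≤ w i * z i ^ r :=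
    mul_nonneg (hw i hi) (Real.rpow_nonneg (hz i hi).le r)
  have hterm (i : ι) (hi : i ∈ s) :
      w i * z i ^ (a * t + b * u) = (w i * z i ^ t) ^ a * (w i * z i ^ u) ^ b := by
    have hw_split : w i ^ a * w i ^ b = w i := by
      rw [← Real.rpow_add' (hw i hi) (by simp [hab]), hab, Real.rpow_one]
    have hz_split : z i ^ (a * t + b * u) = (z i ^ t) ^ a * (z i ^ u) ^ b := by
      rw [Real.rpow_add (hz i hi), mul_comm a, mul_comm b, Real.rpow_mul (hz i hi).le,
        Real.rpow_mul (hz i hi).le]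
    rw [Real.mul_rpow (hw i hi) (Real.rpow_nonneg (hz i hi).le t),
      Real.mul_rpow (hw i hi) (Real.rpow_nonneg (hz i hi).le u), mul_mul_mul_comm, hw_split,
      hz_split]
  rw [Finset.sum_congr rfl hterm]
  exact sum_rpow_mul_rpow_le_rpow_sum_mul_rpow_sum (hterm_nonneg t) (hterm_nonneg u) ha hb hab

theorem convexOn_log_sum_mul_rpow (hw : ∀ i ∈ s, 0 ≤ w i) (hw_sum : ∑ i ∈ s, w i ≠ 0)
    (hz : ∀ i ∈ s, 0 < z i) :
    ConvexOn ℝ Set.univ fun t : ℝ => Real.log (∑ i ∈ s, w i * z i ^ t) := by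
  have hpos := sum_mul_rpow_pos hw hw_sum hz
  refine convexOn_iff_forall_pos.mpr ⟨convex_univ, fun t _ u _ a b ha hb hab => ?_⟩
  simp only [smul_eq_mul]
  calc Real.log (∑ i ∈ s, w i * z i ^ (a * t + b * u))
      ≤ Real.log ((∑ i ∈ s, w i * z i ^ t) ^ a * (∑ i ∈ s, w i * z i ^ u) ^ b) :=
        Real.log_le_log (hpos _) (sum_mul_rpow_add_le hw hz ha hb hab t u)
    _ = a * Real.log (∑ i ∈ s, w i * z i ^ t) + b * Real.log (∑ i ∈ s, w i * z i ^ u) := by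
        rw [Real.log_mul (Real.rpow_pos_of_pos (hpos t) a).ne'
          (Real.rpow_pos_of_pos (hpos u) b).ne', Real.log_rpow (hpos t), Real.log_rpow (hpos u)]

theorem monotoneOn_log_sum_mul_rpow_div (hw : ∀ i ∈ s, 0 ≤ w i) (hw_sum : ∑ i ∈ s, w i = 1)
    (hz : ∀ i ∈ s, 0 < z i) :
    MonotoneOn (fun t : ℝ => Real.log (∑ i ∈ s, w i * z i ^ t) / t) {0}ᶜ := by
  intro t ht u hu htu
  have hconv := convexOn_log_sum_mul_rpow hw (hw_sum.trans_ne one_ne_zero) hz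
  have hzero : Real.log (∑ i ∈ s, w i * z i ^ (0 : ℝ)) = 0 := by
    simp only [Real.rpow_zero, mul_one, hw_sum, Real.log_one]
  simpa only [hzero, sub_zero] using
    hconv.secant_mono (Set.mem_univ 0) (Set.mem_univ t) (Set.mem_univ u) ht hu htu

end WeightedPowerSums

theorem renyi_cross_entropy_antitone_in_order_general {S : Type*} {s : Finset S} {p q : S → ℝ}
    (hp0 : ∀ x ∈ s, 0 ≤ p x) (hp1 : ∑ x ∈ s, p x = 1) (hq0 : ∀ x ∈ s, 0 < q x) :
    AntitoneOn (fun α : ℝ => (1 / (1 - α)) * Real.log (∑ x ∈ s, p x * q x ^ (α - 1))) {1}ᶜ := by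
  have hslope (α : ℝ) : (1 / (1 - α)) * Real.log (∑ x ∈ s, p x * q x ^ (α - 1)) =
      -(Real.log (∑ x ∈ s, p x * q x ^ (α - 1)) / (α - 1)) := by
    rw [one_div_mul_eq_div, ← neg_sub α 1, div_neg]
  intro α₁ hα₁ α₂ hα₂ h12
  simp only [hslope]
  exact neg_le_neg <| monotoneOn_log_sum_mul_rpow_div hp0 hp1 hq0
    (sub_ne_zero.mpr hα₁) (sub_ne_zero.mpr hα₂) (sub_le_sub_right h12 1)

/-- For probability mass functions `p` and `q` on a nonempty finite set with `q` everywhere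
positive, the Rényi cross-entropy `H_α(p;q) = (1/(1-α)) ln ∑_x p(x) q(x)^(α-1)` is
non-increasing in the order `α`: if `0 < α₁ < α₂` with `α₁ ≠ 1` and `α₂ ≠ 1`, then
`H_{α₂}(p;q) ≤ H_{α₁}(p;q)`. -/
theorem renyi_cross_entropy_antitone_in_order
    {S : Type*} [Fintype S] [Nonempty S]
    (p q : S → ℝ)
    (hp0 : ∀ x, 0 ≤ p x) (hp1 : ∑ x, p x = 1)
    (hq0 : ∀ x, 0 < q x) (hq1 : ∑ x, q x = 1)
    (α₁ α₂ : ℝ) (hα₁ : 0 < α₁) (h12 : α₁ < α₂) (hα₁1 : α₁ ≠ 1) (hα₂1 : α₂ ≠ 1) :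
    (1 / (1 - α₂)) * Real.log (∑ x, p x * q x ^ (α₂ - 1)) ≤
      (1 / (1 - α₁)) * Real.log (∑ x, p x * q x ^ (α₁ - 1)) := by
  exact renyi_cross_entropy_antitone_in_order_general (fun x _ => hp0 x) hp1 (fun x _ => hq0 x)
    hα₁1 hα₂1 h12.le
end

section
/- Let S be a nonempty finite set and let p and q be probability mass functions on S with p(x) > 0 for every x in S. Then the limit as α → ∞ of the Rényi cross-entropy H_α(p;q) equals −ln q_M, where q_M = max_{x∈S} q(x). -/
open Filter

/-!
With `M = max q` attained at `m`, the power sum is trapped between two multiples of the same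
exponential, `p m * M ^ t ≤ ∑ x, p x * q x ^ t ≤ (∑ x, p x) * M ^ t`. Constant factors disappear
after taking logarithms and dividing by `t = α - 1 → ∞`, which leaves `log M`.
-/

theorem tendsto_log_const_mul_rpow_div {c M : ℝ} (hc : c ≠ 0) (hM : 0 < M) :
    Tendsto (fun t : ℝ => Real.log (c * M ^ t) / t) atTop (nhds (Real.log M)) := by
  have hlim : Tendsto (fun t : ℝ => Real.log c / t + Real.log M) atTop (nhds (Real.log M)) := by
    simpa only [zero_add, id_eq] using
      (tendsto_id.const_div_atTop (Real.log c)).add_const (Real.log M)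
  refine hlim.congr' ?_
  filter_upwards [eventually_ne_atTop 0] with t ht
  rw [Real.log_mul hc (Real.rpow_pos_of_pos hM t).ne', Real.log_rpow hM, add_div,
    mul_div_cancel_left₀ _ ht]

theorem tendsto_log_div_of_const_mul_rpow_le_of_le {f : ℝ → ℝ} {c C M : ℝ}
    (hc : 0 < c) (hM : 0 < M) (hlower : ∀ᶠ t in atTop, c * M ^ t ≤ f t)
    (hupper : ∀ᶠ t in atTop, f t ≤ C * M ^ t) :
    Tendsto (fun t : ℝ => Real.log (f t) / t) atTop (nhds (Real.log M)) := by
  have hcC : c ≤ C := by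
    obtain ⟨t, hlow, hup⟩ := (hlower.and hupper).exists
    exact le_of_mul_le_mul_right (hlow.trans hup) (Real.rpow_pos_of_pos hM t)
  refine tendsto_of_tendsto_of_tendsto_of_le_of_le' (tendsto_log_const_mul_rpow_div hc.ne' hM)
    (tendsto_log_const_mul_rpow_div (hc.trans_le hcC).ne' hM) ?_ ?_
  · filter_upwards [hlower, eventually_ge_atTop 0] with t hlow ht
    have hpos : 0 < c * M ^ t := mul_pos hc (Real.rpow_pos_of_pos hM t)
    exact div_le_div_of_nonneg_right (Real.log_le_log hpos hlow) ht
  · filter_upwards [hlower, hupper, eventually_ge_atTop 0] with t hlow hup ht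
    have hpos : 0 < f t := (mul_pos hc (Real.rpow_pos_of_pos hM t)).trans_le hlow
    exact div_le_div_of_nonneg_right (Real.log_le_log hpos hup) ht

section WeightedPowerSum

variable {S : Type*} {s : Finset S} {p q : S → ℝ}

theorem mul_rpow_le_sum_mul_rpow {m : S} (hp : ∀ x ∈ s, 0 ≤ p x) (hq : ∀ x ∈ s, 0 ≤ q x)
    (hm : m ∈ s) (t : ℝ) : p m * q m ^ t ≤ ∑ x ∈ s, p x * q x ^ t :=
  Finset.single_le_sum (f := fun x => p x * q x ^ t)
    (fun x hx => mul_nonneg (hp x hx) (Real.rpow_nonneg (hq x hx) t)) hm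

theorem sum_mul_rpow_le_of_le {M t : ℝ} (hp : ∀ x ∈ s, 0 ≤ p x) (hq : ∀ x ∈ s, 0 ≤ q x)
    (hqM : ∀ x ∈ s, q x ≤ M) (ht : 0 ≤ t) :
    ∑ x ∈ s, p x * q x ^ t ≤ (∑ x ∈ s, p x) * M ^ t := by
  rw [Finset.sum_mul]
  exact Finset.sum_le_sum fun x hx =>
    mul_le_mul_of_nonneg_left (Real.rpow_le_rpow (hq x hx) (hqM x hx) ht) (hp x hx)

theorem tendsto_log_sum_mul_rpow_div {m : S} (hp : ∀ x ∈ s, 0 ≤ p x) (hq : ∀ x ∈ s, 0 ≤ q x)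
    (hm : m ∈ s) (hpm : 0 < p m) (hqm : 0 < q m) (hmax : ∀ x ∈ s, q x ≤ q m) :
    Tendsto (fun t : ℝ => Real.log (∑ x ∈ s, p x * q x ^ t) / t) atTop
      (nhds (Real.log (q m))) := by
  have hupper : ∀ᶠ t : ℝ in atTop, ∑ x ∈ s, p x * q x ^ t ≤ (∑ x ∈ s, p x) * q m ^ t :=
    (eventually_ge_atTop 0).mono fun _ ht => sum_mul_rpow_le_of_le hp hq hmax ht
  exact tendsto_log_div_of_const_mul_rpow_le_of_le hpm hqm
    (.of_forall (mul_rpow_le_sum_mul_rpow hp hq hm)) hupper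

theorem renyi_cross_entropy_tendsto_neg_log_max_general (hs : s.Nonempty)
    (hp : ∀ x ∈ s, 0 < p x) (hq : ∀ x ∈ s, 0 ≤ q x) (hmax : 0 < s.sup' hs q) :
    Tendsto (fun α : ℝ => (1 / (1 - α)) * Real.log (∑ x ∈ s, p x * q x ^ (α - 1)))
      atTop (nhds (-Real.log (s.sup' hs q))) := by
  obtain ⟨m, hm, hsup⟩ := s.exists_mem_eq_sup' hs q
  have hle : ∀ x ∈ s, q x ≤ q m := fun x hx => hsup ▸ Finset.le_sup' q hx
  rw [hsup] at hmax ⊢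
  have hshift : Tendsto (fun α : ℝ => α - 1) atTop atTop :=
    tendsto_atTop_add_const_right _ (-1) tendsto_id
  have hlim := tendsto_log_sum_mul_rpow_div (fun x hx => (hp x hx).le) hq hm (hp m hm) hmax hle
  refine (hlim.comp hshift).neg.congr fun α => ?_
  rw [Function.comp_apply, one_div_mul_eq_div, ← div_neg, neg_sub]

end WeightedPowerSum

/-- For probability mass functions `p` and `q` on a nonempty finite set `S` with `p` everywhere
positive, the Rényi cross-entropy `H_α(p;q) = (1/(1-α)) ln ∑_x p(x) q(x)^(α-1)` tends to
`-ln q_M` as `α → ∞`, where `q_M = max_{x ∈ S} q(x)`.  (For `q(x) = 0` the term `q(x)^(α-1)`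
is interpreted as `0`, which is the convention of `Real.rpow` when `α ≠ 1`.) -/
theorem renyi_cross_entropy_tendsto_neg_log_max
    {S : Type*} [Fintype S] [Nonempty S]
    (p q : S → ℝ)
    (hp0 : ∀ x, 0 < p x) (hp1 : ∑ x, p x = 1)
    (hq0 : ∀ x, 0 ≤ q x) (hq1 : ∑ x, q x = 1) :
    Tendsto (fun α : ℝ => (1 / (1 - α)) * Real.log (∑ x, p x * q x ^ (α - 1)))
      atTop (nhds (-Real.log (Finset.univ.sup' Finset.univ_nonempty q))) := by
  have hmax : 0 < Finset.univ.sup' Finset.univ_nonempty q :=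
    (Finset.lt_sup'_iff _).mpr
      ((Finset.sum_pos_iff_of_nonneg fun x _ => hq0 x).mp (hq1 ▸ one_pos))
  exact renyi_cross_entropy_tendsto_neg_log_max_general Finset.univ_nonempty
    (fun x _ => hp0 x) (fun x _ => hq0 x) hmax
end

section
/- Let S ⊆ ℝ^d be a measurable set, b : S → [0,∞) and T : S → ℝ^k measurable functions, A : ℝ^k → ℝ, and α > 0 with α ≠ 1. Let η₁, η₂ ∈ ℝ^k and set η_h := η₁ + (α−1)η₂. Suppose that for each i ∈ {1, 2, h} the function f_i(x) := b(x) exp(η_i · T(x) + A(η_i)) is a probability density on S (nonnegative and integrating to 1), that E_h := ∫_S b(x)^{α−1} f_h(x) dx is finite and strictly positive, and that ∫_S f₁(x) f₂(x)^{α−1} dx is finite and strictly positive. Then h_α(f₁; f₂) = (A(η₁) − A(η_h) + ln E_h)/(1−α) − A(η₂). -/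
open MeasureTheory

/-- An exponential-family density with carrier `b`, sufficient statistic `T`,
log-normalization `A` and natural parameter `η`:  `f(x) = b(x) exp(η ⬝ T(x) + A(η))`. -/
noncomputable def expFamilyDensity {d k : ℕ} (b : (Fin d → ℝ) → ℝ)
    (T : (Fin d → ℝ) → Fin k → ℝ) (A : (Fin k → ℝ) → ℝ) (η : Fin k → ℝ)
    (x : Fin d → ℝ) : ℝ :=
  b x * Real.exp ((∑ i, η i * T x i) + A η)

/-- A density of an exponential family over an arbitrary sample space `Ω`, with parameters in an
arbitrary real vector space `V`. The sufficient statistic takes values in the dual of `V`, so that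
`T x η` is the pairing of the natural parameter `η` with the statistic at `x`. -/
noncomputable def dualExpFamilyDensity {Ω V : Type*} [AddCommGroup V] [Module ℝ V] (b : Ω → ℝ)
    (T : Ω → Module.Dual ℝ V) (A : V → ℝ) (η : V) (x : Ω) : ℝ :=
  b x * Real.exp (T x η + A η)

/-- The Rényi differential cross-entropy `h_α(p; q)` of two densities with respect to `μ`. The
integral over a set `S` is the case where `μ` is restricted to `S`. -/
noncomputable def renyiCrossEntropy {Ω : Type*} [MeasurableSpace Ω] (α : ℝ) (μ : Measure Ω)
    (p q : Ω → ℝ) : ℝ :=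
  (1 / (1 - α)) * Real.log (∫ x, p x * q x ^ (α - 1) ∂μ)

theorem mul_exp_mul_mul_exp_rpow {b : ℝ} (hb : 0 ≤ b) (s t r : ℝ) :
    b * Real.exp s * (b * Real.exp t) ^ r = b ^ r * (b * Real.exp (s + r * t)) := by
  rw [Real.mul_rpow hb (Real.exp_pos t).le, ← Real.exp_mul, Real.exp_add, mul_comm r t]
  ring

section ExpFamily

variable {Ω V : Type*} [AddCommGroup V] [Module ℝ V] {b : Ω → ℝ}
  (T : Ω → Module.Dual ℝ V) (A : V → ℝ)

theorem dualExpFamilyDensity_mul_rpow {x : Ω} (hb : 0 ≤ b x) (η₁ η₂ : V) (r : ℝ) :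
    dualExpFamilyDensity b T A η₁ x * dualExpFamilyDensity b T A η₂ x ^ r =
      Real.exp (A η₁ - A (η₁ + r • η₂) + r * A η₂) *
        (b x ^ r * dualExpFamilyDensity b T A (η₁ + r • η₂) x) := by
  have exponent_eq : T x η₁ + A η₁ + r * (T x η₂ + A η₂) =
      (A η₁ - A (η₁ + r • η₂) + r * A η₂) + (T x (η₁ + r • η₂) + A (η₁ + r • η₂)) := by
    rw [map_add, map_smul, smul_eq_mul]
    ring
  simp only [dualExpFamilyDensity]
  rw [mul_exp_mul_mul_exp_rpow hb, exponent_eq, Real.exp_add]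
  ring

variable [MeasurableSpace Ω] {μ : Measure Ω}

theorem integral_dualExpFamilyDensity_mul_rpow (hb : 0 ≤ᵐ[μ] b) (η₁ η₂ : V) (r : ℝ) :
    ∫ x, dualExpFamilyDensity b T A η₁ x * dualExpFamilyDensity b T A η₂ x ^ r ∂μ =
      Real.exp (A η₁ - A (η₁ + r • η₂) + r * A η₂) *
        ∫ x, b x ^ r * dualExpFamilyDensity b T A (η₁ + r • η₂) x ∂μ := by
  rw [← integral_const_mul]
  exact integral_congr_ae
    (hb.mono fun _ hbx => dualExpFamilyDensity_mul_rpow T A hbx η₁ η₂ r)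

theorem renyi_diff_cross_entropy_exponential_family_general (hb : 0 ≤ᵐ[μ] b) {α : ℝ}
    (hα : α ≠ 1) (η₁ η₂ : V)
    (hE : ∫ x, b x ^ (α - 1) * dualExpFamilyDensity b T A (η₁ + (α - 1) • η₂) x ∂μ ≠ 0) :
    renyiCrossEntropy α μ (dualExpFamilyDensity b T A η₁) (dualExpFamilyDensity b T A η₂) =
      (A η₁ - A (η₁ + (α - 1) • η₂) + Real.log
          (∫ x, b x ^ (α - 1) * dualExpFamilyDensity b T A (η₁ + (α - 1) • η₂) x ∂μ)) / (1 - α) -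
        A η₂ := by
  have one_sub_ne_zero : 1 - α ≠ 0 := sub_ne_zero.mpr hα.symm
  rw [renyiCrossEntropy, integral_dualExpFamilyDensity_mul_rpow T A hb,
    Real.log_mul (Real.exp_ne_zero _) hE, Real.log_exp]
  field_simp
  ring

end ExpFamily

/-- Rényi differential cross-entropy between two exponential-family densities `f₁, f₂` of the
same type with natural parameters `η₁, η₂`: with `η_h = η₁ + (α-1)η₂` and
`E_h = ∫_S b(x)^(α-1) f_h(x) dx`, one has
`h_α(f₁;f₂) = (A(η₁) - A(η_h) + ln E_h)/(1-α) - A(η₂)`. -/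
theorem renyi_diff_cross_entropy_exponential_family
    {d k : ℕ} (S : Set (Fin d → ℝ)) (hS : MeasurableSet S)
    (b : (Fin d → ℝ) → ℝ) (T : (Fin d → ℝ) → Fin k → ℝ) (A : (Fin k → ℝ) → ℝ)
    (hbmeas : Measurable b) (hTmeas : Measurable T)
    (hbnonneg : ∀ x ∈ S, 0 ≤ b x)
    (α : ℝ) (hα : 0 < α) (hα1 : α ≠ 1)
    (η₁ η₂ ηh : Fin k → ℝ) (hηh : ηh = η₁ + (α - 1) • η₂)
    (hf₁ : ∫ x in S, expFamilyDensity b T A η₁ x = 1)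
    (hf₂ : ∫ x in S, expFamilyDensity b T A η₂ x = 1)
    (hfh : ∫ x in S, expFamilyDensity b T A ηh x = 1)
    (hEh_int : IntegrableOn (fun x => b x ^ (α - 1) * expFamilyDensity b T A ηh x) S)
    (hEh_pos : 0 < ∫ x in S, b x ^ (α - 1) * expFamilyDensity b T A ηh x)
    (hce_int : IntegrableOn
      (fun x => expFamilyDensity b T A η₁ x * expFamilyDensity b T A η₂ x ^ (α - 1)) S)
    (hce_pos : 0 < ∫ x in S,
      expFamilyDensity b T A η₁ x * expFamilyDensity b T A η₂ x ^ (α - 1)) :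
    (1 / (1 - α)) *
        Real.log (∫ x in S, expFamilyDensity b T A η₁ x * expFamilyDensity b T A η₂ x ^ (α - 1)) =
      (A η₁ - A ηh +
          Real.log (∫ x in S, b x ^ (α - 1) * expFamilyDensity b T A ηh x)) / (1 - α) -
        A η₂ := by
  subst hηh
  exact renyi_diff_cross_entropy_exponential_family_general
    (fun x => (dotProductBilin ℝ ℝ).flip (T x)) A
    (ae_restrict_of_forall_mem hS hbnonneg) hα1 η₁ η₂ hEh_pos.ne'
end

section
/- Let α > 0, α ≠ 1, let p be the Gaussian density with mean μ₁ and variance σ₁² > 0 and q the Gaussian density with mean μ₂ and variance σ₂² > 0, and suppose σ_h² := σ₂² + (α−1)σ₁² > 0. Then h_α(p;q) = (1/2) [ ln(2πσ₂²) + (1/(1−α)) ln(σ₂²/σ_h²) + (μ₁−μ₂)²/σ_h² ]. -/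
open MeasureTheory

/-- The Gaussian probability density with mean `μ` and variance `v`. -/
noncomputable def gaussianPdf (μ v x : ℝ) : ℝ :=
  (1 / Real.sqrt (2 * Real.pi * v)) * Real.exp (-(x - μ) ^ 2 / (2 * v))

/-
A power of a Gaussian density is a constant times `exp (-t * (x - c) ^ 2)`, so the integral reduces
to the expectation of `exp (-t * (X - c) ^ 2)` for a Gaussian variable `X`. Completing the square
turns this expectation into a translated Gaussian integral.
-/

lemma mul_sub_sq_add_mul_sub_sq {K : Type*} [Field K] {a b : K} (hab : a + b ≠ 0) (x y z : K) :
    a * (x - y) ^ 2 + b * (x - z) ^ 2 =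
      (a + b) * (x - (a * y + b * z) / (a + b)) ^ 2 + a * b / (a + b) * (y - z) ^ 2 := by
  field_simp
  ring

lemma integral_exp_neg_mul_sub_sq_add_mul_sub_sq {a b : ℝ} (hab : 0 < a + b) (y z : ℝ) :
    ∫ x : ℝ, Real.exp (-(a * (x - y) ^ 2 + b * (x - z) ^ 2)) =
      Real.sqrt (Real.pi / (a + b)) * Real.exp (-(a * b / (a + b) * (y - z) ^ 2)) := by
  simp_rw [mul_sub_sq_add_mul_sub_sq hab.ne', neg_add, Real.exp_add, ← neg_mul (a + b)]
  rw [integral_mul_const,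
    integral_sub_right_eq_self (fun x : ℝ ↦ Real.exp (-(a + b) * x ^ 2)), integral_gaussian]

lemma integral_gaussianPdf_mul_exp_neg_mul_sub_sq {v t : ℝ} (hv : 0 < v) (ht : 0 < 1 + 2 * t * v)
    (μ c : ℝ) :
    ∫ x : ℝ, gaussianPdf μ v x * Real.exp (-(t * (x - c) ^ 2)) =
      Real.exp (-(t / (1 + 2 * t * v) * (μ - c) ^ 2)) / Real.sqrt (1 + 2 * t * v) := by
  have coeff_add : 1 / (2 * v) + t = (1 + 2 * t * v) / (2 * v) := by field_simp
  have coeff_harmonic :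
      1 / (2 * v) * t / ((1 + 2 * t * v) / (2 * v)) = t / (1 + 2 * t * v) := by field_simp
  have coeff_pos : 0 < 1 / (2 * v) + t := by rw [coeff_add]; positivity
  have integrand_eq (x : ℝ) : gaussianPdf μ v x * Real.exp (-(t * (x - c) ^ 2)) =
      1 / Real.sqrt (2 * Real.pi * v) *
        Real.exp (-(1 / (2 * v) * (x - μ) ^ 2 + t * (x - c) ^ 2)) := by
    rw [gaussianPdf, mul_assoc, ← Real.exp_add]
    ring_nf
  have normalization : 1 / Real.sqrt (2 * Real.pi * v) *
      Real.sqrt (Real.pi / ((1 + 2 * t * v) / (2 * v))) = 1 / Real.sqrt (1 + 2 * t * v) := by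
    have quotient_eq : Real.pi / ((1 + 2 * t * v) / (2 * v)) =
        2 * Real.pi * v / (1 + 2 * t * v) := by field_simp
    rw [quotient_eq, Real.sqrt_div (by positivity)]
    field_simp
  simp_rw [integrand_eq]
  rw [integral_const_mul, integral_exp_neg_mul_sub_sq_add_mul_sub_sq coeff_pos, coeff_add,
    coeff_harmonic, ← mul_assoc, normalization, one_div_mul_eq_div]

lemma gaussianPdf_rpow {v : ℝ} (hv : 0 < v) (μ x s : ℝ) :
    gaussianPdf μ v x ^ s =
      (2 * Real.pi * v) ^ (-(s / 2)) * Real.exp (-(s / (2 * v) * (x - μ) ^ 2)) := by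
  rw [gaussianPdf, Real.mul_rpow (by positivity) (Real.exp_pos _).le, ← Real.exp_mul,
    Real.sqrt_eq_rpow, one_div, ← Real.rpow_neg (by positivity), ← Real.rpow_mul (by positivity)]
  ring_nf

lemma integral_gaussianPdf_mul_rpow {v₁ v₂ s : ℝ} (hv₁ : 0 < v₁) (hv₂ : 0 < v₂)
    (hs : 0 < v₂ + s * v₁) (μ₁ μ₂ : ℝ) :
    ∫ x : ℝ, gaussianPdf μ₁ v₁ x * gaussianPdf μ₂ v₂ x ^ s =
      (2 * Real.pi * v₂) ^ (-(s / 2)) * (Real.exp (-(s / 2 * ((μ₁ - μ₂) ^ 2 / (v₂ + s * v₁)))) *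
        Real.sqrt (v₂ / (v₂ + s * v₁))) := by
  have scale_eq : 1 + 2 * (s / (2 * v₂)) * v₁ = (v₂ + s * v₁) / v₂ := by field_simp
  have scale_pos : 0 < 1 + 2 * (s / (2 * v₂)) * v₁ := by rw [scale_eq]; positivity
  have exponent_eq : s / (2 * v₂) / ((v₂ + s * v₁) / v₂) * (μ₁ - μ₂) ^ 2 =
      s / 2 * ((μ₁ - μ₂) ^ 2 / (v₂ + s * v₁)) := by field_simp
  simp_rw [gaussianPdf_rpow hv₂, mul_left_comm (gaussianPdf μ₁ v₁ _)]
  rw [integral_const_mul, integral_gaussianPdf_mul_exp_neg_mul_sub_sq hv₁ scale_pos, scale_eq,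
    exponent_eq, div_eq_mul_inv (Real.exp _), ← Real.sqrt_inv, inv_div]

lemma log_integral_gaussianPdf_mul_rpow {v₁ v₂ s : ℝ} (hv₁ : 0 < v₁) (hv₂ : 0 < v₂)
    (hs : 0 < v₂ + s * v₁) (μ₁ μ₂ : ℝ) :
    Real.log (∫ x : ℝ, gaussianPdf μ₁ v₁ x * gaussianPdf μ₂ v₂ x ^ s) =
      1 / 2 * (Real.log (v₂ / (v₂ + s * v₁)) -
        s * (Real.log (2 * Real.pi * v₂) + (μ₁ - μ₂) ^ 2 / (v₂ + s * v₁))) := by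
  rw [integral_gaussianPdf_mul_rpow hv₁ hv₂ hs, Real.log_mul (by positivity) (by positivity),
    Real.log_mul (by positivity) (by positivity), Real.log_rpow (by positivity), Real.log_exp,
    Real.log_sqrt (by positivity)]
  ring

theorem renyi_diff_cross_entropy_gaussian_general
    (α : ℝ) (hα1 : α ≠ 1) (μ₁ μ₂ v₁ v₂ : ℝ) (hv₁ : 0 < v₁) (hv₂ : 0 < v₂)
    (vh : ℝ) (hvh_def : vh = v₂ + (α - 1) * v₁) (hvh : 0 < vh) :
    (1 / (1 - α)) * Real.log (∫ x : ℝ, gaussianPdf μ₁ v₁ x * gaussianPdf μ₂ v₂ x ^ (α - 1)) =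
      (1 / 2) * (Real.log (2 * Real.pi * v₂) + (1 / (1 - α)) * Real.log (v₂ / vh) +
        (μ₁ - μ₂) ^ 2 / vh) := by
  have order_ne : 1 - α ≠ 0 := sub_ne_zero.mpr hα1.symm
  subst hvh_def
  rw [log_integral_gaussianPdf_mul_rpow hv₁ hv₂ hvh]
  linear_combination (1 / 2) * (Real.log (2 * Real.pi * v₂) +
    (μ₁ - μ₂) ^ 2 / (v₂ + (α - 1) * v₁)) * one_div_mul_cancel order_ne

/-- Rényi differential cross-entropy between two Gaussian densities: if `p` is Gaussian with
mean `μ₁`, variance `σ₁² > 0`, `q` is Gaussian with mean `μ₂`, variance `σ₂² > 0`, and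
`σ_h² := σ₂² + (α-1)σ₁² > 0`, then
`h_α(p;q) = (1/2)[ln(2πσ₂²) + (1/(1-α)) ln(σ₂²/σ_h²) + (μ₁-μ₂)²/σ_h²]`. -/
theorem renyi_diff_cross_entropy_gaussian
    (α : ℝ) (hα : 0 < α) (hα1 : α ≠ 1)
    (μ₁ μ₂ v₁ v₂ : ℝ) (hv₁ : 0 < v₁) (hv₂ : 0 < v₂)
    (vh : ℝ) (hvh_def : vh = v₂ + (α - 1) * v₁) (hvh : 0 < vh) :
    (1 / (1 - α)) * Real.log (∫ x : ℝ, gaussianPdf μ₁ v₁ x * gaussianPdf μ₂ v₂ x ^ (α - 1)) =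
      (1 / 2) * (Real.log (2 * Real.pi * v₂) + (1 / (1 - α)) * Real.log (v₂ / vh) +
        (μ₁ - μ₂) ^ 2 / vh) :=
  renyi_diff_cross_entropy_gaussian_general α hα1 μ₁ μ₂ v₁ v₂ hv₁ hv₂ vh hvh_def hvh
end

section
/- Let α > 0, α ≠ 1, let p be the Laplace density with location μ and scale b₁ > 0 and q the Laplace density with the same location μ and scale b₂ > 0, and suppose b_h := b₂ + (α−1)b₁ > 0. Then h_α(p;q) = ln(2b₂) + (1/(1−α)) ln(b₂/b_h). -/
open MeasureTheory

/-- The Laplace probability density with location `μ` and scale `b`. -/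
noncomputable def laplacePdf (μ b x : ℝ) : ℝ :=
  (1 / (2 * b)) * Real.exp (-|x - μ| / b)

/-!
Laplace densities with a common location are, up to normalization, exponentials of multiples of
`|x - μ|`, so `p * q ^ (α - 1)` is again a multiple of a Laplace density, of scale `b₁ * b₂ / b_h`.
Since a density integrates to one, the constant factor `(2 * b₂) ^ (1 - α) * (b₂ / b_h)` is the
value of the integral.
-/

theorem integral_exp_neg_mul_abs {c : ℝ} (hc : 0 < c) :
    ∫ x : ℝ, Real.exp (-c * |x|) = 2 / c := by
  rw [integral_comp_abs (f := fun x => Real.exp (-c * x)),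
    integral_exp_mul_Ioi (neg_lt_zero.mpr hc), mul_zero, Real.exp_zero, neg_div_neg_eq,
    mul_one_div]

section LaplacePdf

variable {b b₁ b₂ : ℝ}

theorem integral_laplacePdf (μ : ℝ) (hb : 0 < b) : ∫ x, laplacePdf μ b x = 1 :=
  calc ∫ x, laplacePdf μ b x
      = ∫ x, laplacePdf 0 b (x - μ) := by simp only [laplacePdf, sub_zero]
    _ = ∫ x, laplacePdf 0 b x := integral_sub_right_eq_self _ μ
    _ = 1 / (2 * b) * ∫ x, Real.exp (-b⁻¹ * |x|) := by
      simp only [laplacePdf, sub_zero, integral_const_mul, div_eq_inv_mul, neg_mul, mul_neg]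
    _ = 1 := by
      rw [integral_exp_neg_mul_abs (inv_pos.mpr hb)]
      field_simp

theorem laplacePdf_rpow (μ x s : ℝ) (hb : 0 ≤ b) :
    laplacePdf μ b x ^ s = (2 * b) ^ (-s) * Real.exp (-|x - μ| / b * s) := by
  have h2b : 0 ≤ 2 * b := by positivity
  rw [laplacePdf, Real.mul_rpow (one_div_nonneg.mpr h2b) (Real.exp_pos _).le, ← Real.exp_mul,
    one_div, Real.inv_rpow h2b, Real.rpow_neg h2b]

theorem laplacePdf_mul_laplacePdf_rpow (μ x : ℝ) {s : ℝ} (hb₁ : b₁ ≠ 0) (hb₂ : 0 < b₂)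
    (hs : b₂ + s * b₁ ≠ 0) :
    laplacePdf μ b₁ x * laplacePdf μ b₂ x ^ s =
      (2 * b₂) ^ (-s) * (b₂ / (b₂ + s * b₁)) *
        laplacePdf μ (b₁ * b₂ / (b₂ + s * b₁)) x := by
  have exponents_add : -|x - μ| / (b₁ * b₂ / (b₂ + s * b₁)) =
      -|x - μ| / b₁ + -|x - μ| / b₂ * s := by
    field_simp
    ring
  rw [laplacePdf_rpow μ x s hb₂.le, laplacePdf, laplacePdf, exponents_add, Real.exp_add]
  generalize b₂ + s * b₁ = c at hs ⊢
  field_simp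

theorem integral_laplacePdf_mul_laplacePdf_rpow (μ : ℝ) {s : ℝ} (hb₁ : 0 < b₁) (hb₂ : 0 < b₂)
    (hs : 0 < b₂ + s * b₁) :
    ∫ x, laplacePdf μ b₁ x * laplacePdf μ b₂ x ^ s =
      (2 * b₂) ^ (-s) * (b₂ / (b₂ + s * b₁)) := by
  simp only [laplacePdf_mul_laplacePdf_rpow μ _ hb₁.ne' hb₂ hs.ne', integral_const_mul]
  rw [integral_laplacePdf μ (by positivity), mul_one]

end LaplacePdf

theorem renyi_diff_cross_entropy_laplace_general
    (α : ℝ) (hα1 : α ≠ 1)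
    (μ b₁ b₂ : ℝ) (hb₁ : 0 < b₁) (hb₂ : 0 < b₂)
    (bh : ℝ) (hbh_def : bh = b₂ + (α - 1) * b₁) (hbh : 0 < bh) :
    (1 / (1 - α)) * Real.log (∫ x : ℝ, laplacePdf μ b₁ x * laplacePdf μ b₂ x ^ (α - 1)) =
      Real.log (2 * b₂) + (1 / (1 - α)) * Real.log (b₂ / bh) := by
  subst hbh_def
  have one_sub_ne_zero : 1 - α ≠ 0 := sub_ne_zero.mpr hα1.symm
  rw [integral_laplacePdf_mul_laplacePdf_rpow μ hb₁ hb₂ hbh, neg_sub,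
    Real.log_mul (by positivity) (by positivity), Real.log_rpow (by positivity), mul_add,
    ← mul_assoc, one_div_mul_cancel one_sub_ne_zero, one_mul]

/-- Rényi differential cross-entropy between two Laplace densities with common location `μ`:
if `p` has scale `b₁ > 0`, `q` has scale `b₂ > 0`, and `b_h := b₂ + (α-1)b₁ > 0`, then
`h_α(p;q) = ln(2b₂) + (1/(1-α)) ln(b₂/b_h)`. -/
theorem renyi_diff_cross_entropy_laplace
    (α : ℝ) (hα : 0 < α) (hα1 : α ≠ 1)
    (μ b₁ b₂ : ℝ) (hb₁ : 0 < b₁) (hb₂ : 0 < b₂)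
    (bh : ℝ) (hbh_def : bh = b₂ + (α - 1) * b₁) (hbh : 0 < bh) :
    (1 / (1 - α)) * Real.log (∫ x : ℝ, laplacePdf μ b₁ x * laplacePdf μ b₂ x ^ (α - 1)) =
      Real.log (2 * b₂) + (1 / (1 - α)) * Real.log (b₂ / bh) :=
  renyi_diff_cross_entropy_laplace_general α hα1 μ b₁ b₂ hb₁ hb₂ bh hbh_def hbh
end
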